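/- Let d ≥ 1 and for j = 1, 2 let x_j be a permutation of I_d with associated map 𝐱_j : Î_d → Î_d given by 𝐱_j(i) = x_j^{sign(i)}(i). Let σ be an odd bijection of Î_d, with σ̄(i) = |σ(i)| and δ_σ(i) = sign(σ(i)) for i ∈ I_d. Then σ(𝐱_1(i)) = 𝐱_2(σ(i)) holds for all i ∈ Î_d if and only if the following two conditions hold for all i ∈ I_d: (1) δ_σ(x_1(i)) = δ_σ(i); (2) x_2(σ̄(i)) = σ̄(x_1^{δ_σ(i)}(i)). -/

import Mathlib

/-- `Î_d`: the set of integers `i` with `1 ≤ |i| ≤ d`. -/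
def IdxHat (d : ℤ) : Set ℤ := {i : ℤ | 1 ≤ |i| ∧ |i| ≤ d}

/-- `x^s(i)` for positive `i`: `x i` if `s = 1`, `x⁻¹ i` if `s = -1`. -/
def pApp (x : Equiv.Perm ℤ) (s i : ℤ) : ℤ := if s = 1 then x i else x.symm i

/-- `𝐱(i) = x^{sign i}(i)`. -/
def bX (x : Equiv.Perm ℤ) (i : ℤ) : ℤ := if 0 < i then x i else -(x.symm (-i))

/-!
The map `i ↦ -𝐱(i)` is an involution of the signed index set which reverses signs. Since `σ` is odd,
`σ ∘ 𝐱₁ = 𝐱₂ ∘ σ` says that `σ` intertwines the involutions of `x₁` and `x₂`, so the equation holds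
at `i` if and only if it holds at `-𝐱₁(i)`. Condition (1) says that `𝐱₁` preserves the sign of `σ`.
Hence exactly one of `i` and `-𝐱₁(i)` has a positive image under `σ`, and it is enough to test the
equation at the indices `j` with `0 < σ j`. At such a `j` it is condition (2) for `|j|`.
-/

section Abs

variable {α β : Type*} [AddGroup α] [LinearOrder α] [AddGroup β]

theorem mem_or_neg_mem_of_abs_mem {S : Set α} {a : α} (ha : |a| ∈ S) : a ∈ S ∨ -a ∈ S :=
  (abs_choice a).imp (fun h => by rwa [h] at ha) (fun h => by rwa [h] at ha)

theorem abs_map_abs_of_odd [Lattice β] {f : α → β} (hf : f.Odd) (a : α) : |f (|a|)| = |f a| :=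
  abs_by_cases (fun b => |f b| = |f a|) rfl (by rw [hf, abs_neg])

theorem exists_abs_eq_and_map_pos_of_odd [LinearOrder β] [AddLeftStrictMono β] {f : α → β}
    (hf : f.Odd) {a : α} (ha : f a ≠ 0) : ∃ b, |b| = |a| ∧ 0 < f b := by
  rcases ha.lt_or_gt with ha | ha
  · exact ⟨-a, abs_neg a, by rwa [hf, Left.neg_pos_iff]⟩
  · exact ⟨a, rfl, ha⟩

end Abs

section bX

variable {S : Set ℤ} {x : Equiv.Perm ℤ} {i : ℤ}

theorem bX_of_pos (hi : 0 < i) : bX x i = x i := if_pos hi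

theorem bX_of_neg (hi : i < 0) : bX x i = -x.symm (-i) := if_neg hi.not_gt

theorem mapsTo_bX (hS : S ⊆ Set.Ioi 0) (hx : Set.BijOn x S S) :
    Set.MapsTo (bX x) (abs ⁻¹' S) (abs ⁻¹' S) := by
  intro i hi
  rcases mem_or_neg_mem_of_abs_mem hi with hi | hi
  · have hxi : x i ∈ S := hx.mapsTo hi
    rwa [bX_of_pos (hS hi), Set.mem_preimage, abs_of_pos (hS hxi)]
  · have hxi : x.symm (-i) ∈ S := (Equiv.bijOn_symm.2 hx).mapsTo hi
    rwa [bX_of_neg (neg_pos.1 (hS hi)), Set.mem_preimage, abs_neg, abs_of_pos (hS hxi)]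

theorem sign_bX (hS : S ⊆ Set.Ioi 0) (hx : Set.BijOn x S S) (hi : |i| ∈ S) :
    (bX x i).sign = i.sign := by
  rcases mem_or_neg_mem_of_abs_mem hi with hi | hi
  · rw [bX_of_pos (hS hi), Int.sign_eq_one_of_pos (hS (hx.mapsTo hi)),
      Int.sign_eq_one_of_pos (hS hi)]
  · have hi_neg : i < 0 := neg_pos.1 (hS hi)
    have hxi : 0 < x.symm (-i) := hS ((Equiv.bijOn_symm.2 hx).mapsTo hi)
    rw [bX_of_neg hi_neg, Int.sign_eq_neg_one_of_neg (neg_neg_of_pos hxi),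
      Int.sign_eq_neg_one_of_neg hi_neg]

theorem bX_neg_bX (hS : S ⊆ Set.Ioi 0) (hx : Set.BijOn x S S) (hi : |i| ∈ S) :
    bX x (-bX x i) = -i := by
  rcases mem_or_neg_mem_of_abs_mem hi with hi | hi
  · have hxi : 0 < x i := hS (hx.mapsTo hi)
    rw [bX_of_pos (hS hi), bX_of_neg (neg_neg_of_pos hxi), neg_neg, Equiv.symm_apply_apply]
  · have hxi : 0 < x.symm (-i) := hS ((Equiv.bijOn_symm.2 hx).mapsTo hi)
    rw [bX_of_neg (neg_pos.1 (hS hi)), neg_neg, bX_of_pos hxi, Equiv.apply_symm_apply]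

end bX

section Intertwining

variable {S : Set ℤ} {x₁ x₂ : Equiv.Perm ℤ} {σ : ℤ → ℤ} {i j : ℤ}

theorem map_bX_eq_iff_map_bX_neg_bX_eq (hS : S ⊆ Set.Ioi 0)
    (hx₁ : Set.BijOn x₁ S S) (hx₂ : Set.BijOn x₂ S S)
    (hσ : Set.MapsTo σ (abs ⁻¹' S) (abs ⁻¹' S)) (hσodd : σ.Odd) (hi : |i| ∈ S) :
    σ (bX x₁ i) = bX x₂ (σ i) ↔ σ (bX x₁ (-bX x₁ i)) = bX x₂ (σ (-bX x₁ i)) := by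
  have hσx₁ : |σ (bX x₁ i)| ∈ S := hσ (mapsTo_bX hS hx₁ hi)
  rw [bX_neg_bX hS hx₁ hi, hσodd, hσodd]
  constructor
  · intro h
    rw [h, bX_neg_bX hS hx₂ (hσ hi)]
  · intro h
    calc σ (bX x₁ i) = -(-σ (bX x₁ i)) := (neg_neg _).symm
      _ = bX x₂ (-bX x₂ (-σ (bX x₁ i))) := (bX_neg_bX hS hx₂ (by rwa [abs_neg])).symm
      _ = bX x₂ (σ i) := by rw [← h, neg_neg]

theorem forall_sign_map_bX_iff (hS : S ⊆ Set.Ioi 0) (hx₁ : Set.BijOn x₁ S S) (hσodd : σ.Odd) :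
    (∀ i, |i| ∈ S → (σ (bX x₁ i)).sign = (σ i).sign) ↔
      ∀ i ∈ S, (σ (x₁ i)).sign = (σ i).sign := by
  constructor
  · intro h i hi
    simpa only [bX_of_pos (hS hi)] using h i (by rwa [abs_of_pos (hS hi)])
  · intro h i hi
    rcases mem_or_neg_mem_of_abs_mem hi with hi | hi
    · rw [bX_of_pos (hS hi), h i hi]
    · have hsymm := h (x₁.symm (-i)) ((Equiv.bijOn_symm.2 hx₁).mapsTo hi)
      rw [Equiv.apply_symm_apply, hσodd, Int.sign_neg] at hsymm
      rw [bX_of_neg (neg_pos.1 (hS hi)), hσodd, Int.sign_neg, ← hsymm, neg_neg]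

theorem abs_map_pApp_sign_map_abs (hσodd : σ.Odd) (hσj : 0 < σ j) :
    |σ (pApp x₁ (σ |j|).sign |j|)| = |σ (bX x₁ j)| := by
  rcases lt_trichotomy j 0 with hj | rfl | hj
  · have hσ_abs : σ |j| < 0 := by rwa [abs_of_neg hj, hσodd, neg_lt_zero]
    rw [Int.sign_eq_neg_one_of_neg hσ_abs, abs_of_neg hj, bX_of_neg hj, hσodd, abs_neg, pApp,
      if_neg (by decide)]
  · exact absurd hσodd.map_zero hσj.ne'
  · rw [abs_of_pos hj, Int.sign_eq_one_of_pos hσj, bX_of_pos hj, pApp, if_pos rfl]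

theorem map_abs_eq_abs_map_pApp_iff (hσodd : σ.Odd) (hσj : 0 < σ j)
    (hsign : (σ (bX x₁ j)).sign = (σ j).sign) :
    x₂ |σ (|j|)| = |σ (pApp x₁ (σ |j|).sign |j|)| ↔ σ (bX x₁ j) = bX x₂ (σ j) := by
  have hσxj : 0 < σ (bX x₁ j) := by
    rwa [← Int.sign_eq_one_iff_pos, hsign, Int.sign_eq_one_iff_pos]
  rw [abs_map_abs_of_odd hσodd, abs_map_pApp_sign_map_abs hσodd hσj, abs_of_pos hσj,
    abs_of_pos hσxj, bX_of_pos hσj, eq_comm]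

theorem map_bX_eq_of_forall_map_pos (hS : S ⊆ Set.Ioi 0)
    (hx₁ : Set.BijOn x₁ S S) (hx₂ : Set.BijOn x₂ S S)
    (hσ : Set.MapsTo σ (abs ⁻¹' S) (abs ⁻¹' S)) (hσodd : σ.Odd)
    (hsign : ∀ i, |i| ∈ S → (σ (bX x₁ i)).sign = (σ i).sign)
    (hpos : ∀ j, |j| ∈ S → 0 < σ j → σ (bX x₁ j) = bX x₂ (σ j)) (hi : |i| ∈ S) :
    σ (bX x₁ i) = bX x₂ (σ i) := by
  rcases lt_or_ge 0 (σ i) with hσi | hσi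
  · exact hpos i hi hσi
  · have hσi_neg : σ i < 0 := hσi.lt_of_ne (abs_pos.1 (hS (hσ hi)))
    have hσxi : σ (bX x₁ i) < 0 := by
      rwa [← Int.sign_eq_neg_one_iff_neg, hsign i hi, Int.sign_eq_neg_one_iff_neg]
    refine (map_bX_eq_iff_map_bX_neg_bX_eq hS hx₁ hx₂ hσ hσodd hi).2 (hpos _ ?_ ?_)
    · rw [abs_neg]
      exact mapsTo_bX hS hx₁ hi
    · rwa [hσodd, neg_pos]

end Intertwining

theorem stmt6_general {S : Set ℤ} {x₁ x₂ : Equiv.Perm ℤ} {σ : ℤ → ℤ}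
    (hS : S ⊆ Set.Ioi 0) (hx₁ : Set.BijOn x₁ S S) (hx₂ : Set.BijOn x₂ S S)
    (hσ : Set.MapsTo σ (abs ⁻¹' S) (abs ⁻¹' S)) (hσodd : σ.Odd) :
    (∀ i ∈ abs ⁻¹' S, σ (bX x₁ i) = bX x₂ (σ i)) ↔
      ∀ i ∈ S, (σ (x₁ i)).sign = (σ i).sign ∧
        x₂ |σ i| = |σ (pApp x₁ (σ i).sign i)| := by
  constructor
  · intro h i hi
    have hi_abs : |i| = i := abs_of_pos (hS hi)
    have hsign : ∀ k, |k| ∈ S → (σ (bX x₁ k)).sign = (σ k).sign := fun k hk => by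
      rw [h k hk, sign_bX hS hx₂ (hσ hk)]
    have hσi : |σ i| ∈ S := hσ (hi_abs.symm ▸ hi : |i| ∈ S)
    refine ⟨(forall_sign_map_bX_iff hS hx₁ hσodd).1 hsign i hi, ?_⟩
    obtain ⟨j, hji, hσj⟩ := exists_abs_eq_and_map_pos_of_odd hσodd (abs_pos.1 (hS hσi))
    obtain rfl : |j| = i := hji.trans hi_abs
    exact (map_abs_eq_abs_map_pApp_iff hσodd hσj (hsign j hi)).2 (h j hi)
  · intro h i hi
    have hsign := (forall_sign_map_bX_iff hS hx₁ hσodd).2 fun k hk => (h k hk).1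
    refine map_bX_eq_of_forall_map_pos hS hx₁ hx₂ hσ hσodd hsign (fun j hj hσj => ?_) hi
    exact (map_abs_eq_abs_map_pApp_iff hσodd hσj (hsign j hj)).1 (h _ hj).2

/-- `σ ∘ 𝐱₁ = 𝐱₂ ∘ σ` on `Î_d` iff conditions (1) and (2) hold on `I_d`,
where `σ̄ i = |σ i|` and `δ_σ i = sign (σ i)`. -/
theorem stmt6 (d : ℤ) (hd : 1 ≤ d)
    (x₁ x₂ : Equiv.Perm ℤ)
    (hx₁ : Set.BijOn x₁ (Set.Icc 1 d) (Set.Icc 1 d))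
    (hx₂ : Set.BijOn x₂ (Set.Icc 1 d) (Set.Icc 1 d))
    (σ : Equiv.Perm ℤ) (hσ : Set.BijOn σ (IdxHat d) (IdxHat d))
    (hσodd : ∀ i : ℤ, σ (-i) = -σ i) :
    (∀ i ∈ IdxHat d, σ (bX x₁ i) = bX x₂ (σ i))
    ↔ (∀ i ∈ Set.Icc (1:ℤ) d,
        Int.sign (σ (x₁ i)) = Int.sign (σ i)
        ∧ x₂ (|σ i|) = |σ (pApp x₁ (Int.sign (σ i)) i)|) := by
  exact stmt6_general (fun _ hi => Int.lt_of_lt_of_le one_pos hi.1) hx₁ hx₂ hσ.mapsTo hσodd
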